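/- Let N ≥ 1 and s ∈ (0,1) with N > 2s, let x ∈ ℝ^N, and let ψ : ℝ^N → ℝ be smooth with compact support. In the case s = 1/2, fix β ∈ (0,1). Then the double integral ∬_{ℝ^N×ℝ^N} |ψ(y) − ψ(z)| · |y−z|^{−N−2s} · f_x(y,z) dy dz is finite, where f_x(y,z) := max(|x−y|^{2s−N}, |x−z|^{2s−N}) if 2s < 1; f_x(y,z) := |y−z| · max(|x−y|^{2s−N−1}, |x−z|^{2s−N−1}) if 2s > 1; and f_x(y,z) := |y−z|^β · max(|x−y|^{1−N−β}, |x−z|^{1−N−β}) if s = 1/2. -/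

import Mathlib

open MeasureTheory
open scoped ENNReal
open Set

noncomputable section

/-!
All three regimes are one estimate. With `γ = 2s`, `2s - 1`, `1 - β` respectively, the power of
`|y - z|` in `f_x` merges with the kernel and the integrand becomes
`|ψ y - ψ z| |y - z|^(-N-γ) max (|x - y|^(γ-N)) (|x - z|^(γ-N))` with `0 < γ < 1`.

Bounding the maximum by the sum, and exchanging `y` and `z`, leaves only the term with
`|x - y|^(γ-N)`. Let `ψ` be supported in the ball of radius `R` about `x`, be `L`-Lipschitz and
bounded by `M`.

* If `|x - y| ≤ 2R`, then `|ψ y - ψ z| ≤ L |y - z|` controls `|y - z| ≤ 1` and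
  `|ψ y - ψ z| ≤ 2M` controls `|y - z| > 1`. The term is dominated by a product of a function of
  `x - y` and a function of `z - y`, both integrable: locally because `γ - N > -N` and
  `1 - N - γ > -N`, at infinity because `-N - γ < -N`.
* If `|x - y| > 2R`, then `ψ y = 0`, the integrand vanishes unless `|x - z| ≤ R`, and then
  `|y - z| ≥ |x - y| / 2`. The term is dominated by the indicator of `|x - z| ≤ R` times a multiple
  of `|x - y|^(-2N)`, which is integrable away from `x`.

The pointwise bound is `le_majorant`, and the integrability of the majorant is
`integrable_majorant`.
-/

/-- Euclidean space `ℝ^N`. -/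
abbrev Euc (N : ℕ) := EuclideanSpace ℝ (Fin N)

/-- The power `r ^ p` cut off to `r ≤ ρ`. -/
def nearPow (p ρ r : ℝ) : ℝ := (Iic ρ).indicator (fun t => t ^ p) r

/-- The power `r ^ p` cut off to `r > ρ`. -/
def tailPow (p ρ r : ℝ) : ℝ := (Ioi ρ).indicator (fun t => t ^ p) r

/-- The Jacobian `r ^ (N - 1)` of polar coordinates (natural subtraction) times a real power. -/
lemma radial_weight {N : ℕ} (hN : 1 ≤ N) (p : ℝ) {r : ℝ} (hr : 0 < r) :
    r ^ (N - 1) * r ^ p = r ^ (p + N - 1) := by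
  rw [← Real.rpow_natCast, ← Real.rpow_add hr]
  congr 1
  push_cast [hN]
  ring

lemma integrable_nearPow {N : ℕ} (hN : 1 ≤ N) {p ρ : ℝ} (hp : -(N : ℝ) < p) (hρ : 0 ≤ ρ) :
    Integrable (fun w : Euc N => nearPow p ρ ‖w‖) := by
  have : Nonempty (Fin N) := ⟨⟨0, hN⟩⟩
  have : Nontrivial (Euc N) := inferInstance
  rw [integrable_fun_norm_addHaar volume (f := nearPow p ρ)]
  have h : IntegrableOn (fun r : ℝ => r ^ (p + N - 1)) (Ioc 0 ρ) :=
    (intervalIntegrable_iff_integrableOn_Ioc_of_le hρ).1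
      (intervalIntegral.intervalIntegrable_rpow' (by linarith))
  have h2 := (integrable_indicator_iff measurableSet_Ioc).2 h
  refine (h2.integrableOn (s := Ioi 0)).congr_fun (fun r hr => ?_) measurableSet_Ioi
  have hr : 0 < r := hr
  by_cases hrρ : r ≤ ρ
  · simp [nearPow, hr, hrρ, radial_weight hN p hr]
  · simp [nearPow, hrρ]

lemma integrable_tailPow {N : ℕ} (hN : 1 ≤ N) {p ρ : ℝ} (hp : p < -(N : ℝ)) (hρ : 0 < ρ) :
    Integrable (fun w : Euc N => tailPow p ρ ‖w‖) := by
  have : Nonempty (Fin N) := ⟨⟨0, hN⟩⟩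
  have : Nontrivial (Euc N) := inferInstance
  rw [integrable_fun_norm_addHaar volume (f := tailPow p ρ)]
  have h : IntegrableOn (fun r : ℝ => r ^ (p + N - 1)) (Ioi ρ) :=
    integrableOn_Ioi_rpow_of_lt (by linarith) hρ
  have h2 := (integrable_indicator_iff measurableSet_Ioi).2 h
  refine (h2.integrableOn (s := Ioi 0)).congr_fun (fun r hr => ?_) measurableSet_Ioi
  have hr : 0 < r := hr
  by_cases hrρ : ρ < r
  · simp [tailPow, hrρ, radial_weight hN p hr]
  · simp [tailPow, hrρ]

lemma nearPow_nonneg {p ρ r : ℝ} (hr : 0 ≤ r) : 0 ≤ nearPow p ρ r := by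
  unfold nearPow indicator; split_ifs <;> positivity

lemma tailPow_nonneg {p ρ r : ℝ} (hr : 0 ≤ r) : 0 ≤ tailPow p ρ r := by
  unfold tailPow indicator; split_ifs <;> positivity

/-- The integrable majorant of `|ψ y - ψ z| |y - z|^(-N-γ) |x - y|^(γ-N)`: the first summand covers
`|x - y| ≤ 2R`, the second `|x - y| > 2R`. The power `nearPow 0 R` is the indicator of a ball, since
`0 ^ 0 = 1`. The order of arguments `z y` is that of the convolution integrand
`f y * g (z - y)`. -/
def majorant (N : ℕ) (γ A B R : ℝ) (x : Euc N) (z y : Euc N) : ℝ :=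
  A * (nearPow (γ - N) (2 * R) ‖x - y‖ *
      (nearPow (1 - N - γ) 1 ‖z - y‖ + tailPow (-N - γ) 1 ‖z - y‖)) +
    B * (nearPow 0 R ‖x - z‖ * tailPow (-N - N) (2 * R) ‖x - y‖)

lemma integrable_majorant {N : ℕ} (hN : 1 ≤ N) {γ : ℝ} (hγ : 0 < γ) (hγ1 : γ < 1)
    (A B : ℝ) {R : ℝ} (hR : 0 < R) (x : Euc N) :
    Integrable (fun p : Euc N × Euc N => majorant N γ A B R x p.1 p.2) := by
  have hN' : (1 : ℝ) ≤ N := by exact_mod_cast hN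
  have hf : Integrable (fun y : Euc N => nearPow (γ - N) (2 * R) ‖x - y‖) :=
    (integrable_nearPow hN (by linarith) (by linarith)).comp_sub_left x
  have hg : Integrable (fun w : Euc N =>
      nearPow (1 - N - γ) 1 ‖w‖ + tailPow (-N - γ) 1 ‖w‖) :=
    (integrable_nearPow hN (by linarith) zero_le_one).add
      (integrable_tailPow hN (by linarith) zero_lt_one)
  have h1 := hf.convolution_integrand (ContinuousLinearMap.mul ℝ ℝ) hg
  have hb : Integrable (fun z : Euc N => nearPow 0 R ‖x - z‖) :=
    (integrable_nearPow hN (by linarith) hR.le).comp_sub_left x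
  have ht : Integrable (fun y : Euc N => tailPow (-N - N) (2 * R) ‖x - y‖) :=
    (integrable_tailPow hN (by linarith) (by linarith)).comp_sub_left x
  exact (h1.const_mul A).add ((hb.mul_prod ht).const_mul B)

lemma le_majorant {N : ℕ} {γ L M R : ℝ} (hγ : 0 < γ)
    (hL : 0 ≤ L) (hR : 0 < R) {x : Euc N} {ψ : Euc N → ℝ}
    (hlip : ∀ y z, |ψ y - ψ z| ≤ L * ‖y - z‖) (hM : ∀ y, |ψ y| ≤ M)
    (hsupp : ∀ y, R < ‖x - y‖ → ψ y = 0) (y z : Euc N) :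
    |ψ y - ψ z| * ‖y - z‖ ^ (-(N : ℝ) - γ) * ‖x - y‖ ^ (γ - N) ≤
      majorant N γ (L + 2 * M) (2 ^ (N + γ) * M) R x z y := by
  have hM0 : 0 ≤ M := (abs_nonneg _).trans (hM x)
  have hfar0 := mul_nonneg (nearPow_nonneg (p := 0) (ρ := R) (norm_nonneg (x - z)))
    (tailPow_nonneg (p := -N - N) (ρ := 2 * R) (norm_nonneg (x - y)))
  have hw := norm_nonneg (z - y)
  have hn1 := nearPow_nonneg (p := 1 - N - γ) (ρ := 1) hw
  have ht1 := tailPow_nonneg (p := -N - γ) (ρ := 1) hw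
  have hnear0 := mul_nonneg (nearPow_nonneg (p := γ - N) (ρ := 2 * R) (norm_nonneg (x - y)))
    (add_nonneg hn1 ht1)
  unfold majorant
  rw [norm_sub_rev y z]
  by_cases hy : ‖x - y‖ ≤ 2 * R
  · refine le_add_of_le_of_nonneg ?_ (by positivity)
    have hxy : nearPow (γ - N) (2 * R) ‖x - y‖ = ‖x - y‖ ^ (γ - N) := by simp [nearPow, hy]
    have key : |ψ y - ψ z| * ‖z - y‖ ^ (-(N : ℝ) - γ) ≤
        (L + 2 * M) * (nearPow (1 - N - γ) 1 ‖z - y‖ + tailPow (-N - γ) 1 ‖z - y‖) := by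
      rcases hw.eq_or_lt with h0 | h0
      · have : z = y := sub_eq_zero.1 (norm_eq_zero.1 h0.symm)
        subst this
        rw [sub_self, abs_zero, zero_mul]
        positivity
      by_cases h1 : ‖z - y‖ ≤ 1
      · have e : nearPow (1 - N - γ) 1 ‖z - y‖ = ‖z - y‖ * ‖z - y‖ ^ (-(N : ℝ) - γ) := by
          simp only [nearPow, indicator_of_mem (mem_Iic.2 h1)]
          rw [show (1 : ℝ) - N - γ = 1 + (-N - γ) by ring, Real.rpow_add h0, Real.rpow_one]
        have := hlip y z
        rw [norm_sub_rev] at this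
        calc _ ≤ L * ‖z - y‖ * ‖z - y‖ ^ (-(N : ℝ) - γ) := by gcongr
          _ = L * nearPow (1 - N - γ) 1 ‖z - y‖ := by rw [e]; ring
          _ ≤ _ := by gcongr <;> linarith
      · have e : tailPow (-N - γ) 1 ‖z - y‖ = ‖z - y‖ ^ (-(N : ℝ) - γ) := by
          simp [tailPow, not_le.1 h1]
        have : |ψ y - ψ z| ≤ 2 * M := (abs_sub _ _).trans (by linarith [hM y, hM z])
        calc _ ≤ (2 * M) * ‖z - y‖ ^ (-(N : ℝ) - γ) := by gcongr
          _ = (2 * M) * tailPow (-N - γ) 1 ‖z - y‖ := by rw [e]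
          _ ≤ _ := by gcongr <;> linarith
    rw [hxy]
    calc _ ≤ _ := mul_le_mul_of_nonneg_right key (by positivity)
      _ = _ := by ring
  · push Not at hy
    refine le_add_of_nonneg_of_le (by positivity) ?_
    have hψy : ψ y = 0 := hsupp y (by linarith)
    by_cases hz : ‖x - z‖ ≤ R
    · have hxy : 0 < ‖x - y‖ := by linarith
      have e1 : nearPow 0 R ‖x - z‖ = 1 := by simp [nearPow, hz]
      have e2 : tailPow (-N - N) (2 * R) ‖x - y‖ =
          ‖x - y‖ ^ (-(N : ℝ) - γ) * ‖x - y‖ ^ (γ - N) := by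
        simp only [tailPow, indicator_of_mem (mem_Ioi.2 hy)]
        rw [← Real.rpow_add hxy]; congr 1; ring
      have h2 : ‖x - y‖ / 2 ≤ ‖z - y‖ := by
        have := norm_sub_le_norm_sub_add_norm_sub x z y
        linarith
      have h3 : ‖z - y‖ ^ (-(N : ℝ) - γ) ≤ 2 ^ (N + γ) * ‖x - y‖ ^ (-(N : ℝ) - γ) := by
        calc _ ≤ (‖x - y‖ / 2) ^ (-(N : ℝ) - γ) :=
              Real.rpow_le_rpow_of_nonpos (by positivity) h2
                (by have : (0:ℝ) ≤ N := by positivity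
                    linarith)
          _ = _ := by
            rw [Real.div_rpow hxy.le (by norm_num), div_eq_inv_mul,
              ← Real.rpow_neg (by norm_num)]
            congr 2; ring
      have h4 : |ψ y - ψ z| ≤ M := by rw [hψy, zero_sub, abs_neg]; exact hM z
      rw [e1, e2, one_mul]
      calc _ ≤ M * (2 ^ (N + γ) * ‖x - y‖ ^ (-(N : ℝ) - γ)) * ‖x - y‖ ^ (γ - N) := by gcongr
        _ = _ := by ring
    · rw [hψy, hsupp z (not_le.1 hz)]
      simp only [sub_self, abs_zero, zero_mul]
      positivity

/-- The common form of the three regimes, with `γ ∈ (0, 1)`. -/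
lemma lintegral_max_lt_top {N : ℕ} (hN : 1 ≤ N) {γ : ℝ} (hγ : 0 < γ) (hγ1 : γ < 1)
    (x : Euc N) {ψ : Euc N → ℝ} (hψ : ContDiff ℝ (⊤ : ℕ∞) ψ) (hψc : HasCompactSupport ψ) :
    ∫⁻ p : Euc N × Euc N, ENNReal.ofReal (|ψ p.1 - ψ p.2| * ‖p.1 - p.2‖ ^ (-(N : ℝ) - γ) *
      max (‖x - p.1‖ ^ (γ - N)) (‖x - p.2‖ ^ (γ - N))) < ⊤ := by
  obtain ⟨L, hL⟩ :=
    (hψ.of_le (by exact_mod_cast le_top)).lipschitzWith_of_hasCompactSupport hψc one_ne_zero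
  obtain ⟨M, hM⟩ := hψc.exists_bound_of_continuous hψ.continuous
  obtain ⟨R, hR, hsub⟩ := hψc.isBounded.subset_closedBall_lt 0 x
  have hlip : ∀ y z, |ψ y - ψ z| ≤ L * ‖y - z‖ := fun y z => by
    simpa [dist_eq_norm] using hL.dist_le_mul y z
  have hsupp : ∀ y, R < ‖x - y‖ → ψ y = 0 := fun y hy => by
    by_contra h
    have := hsub (subset_tsupport ψ h)
    rw [Metric.mem_closedBall, dist_comm, dist_eq_norm] at this
    linarith
  have hle := le_majorant (x := x) hγ L.2 hR hlip hM hsupp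
  have hint := integrable_majorant hN hγ hγ1 (L + 2 * M) (2 ^ (N + γ) * M) hR x
  refine lt_of_le_of_lt (lintegral_mono fun p => ENNReal.ofReal_le_ofReal ?_)
    (hint.add hint.swap).lintegral_lt_top
  have h1 := hle p.1 p.2
  have h2 := hle p.2 p.1
  rw [abs_sub_comm, norm_sub_rev p.2 p.1] at h2
  have hk : 0 ≤ |ψ p.1 - ψ p.2| * ‖p.1 - p.2‖ ^ (-(N : ℝ) - γ) := by positivity
  calc _ ≤ |ψ p.1 - ψ p.2| * ‖p.1 - p.2‖ ^ (-(N : ℝ) - γ) *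
        (‖x - p.1‖ ^ (γ - N) + ‖x - p.2‖ ^ (γ - N)) := by
        gcongr
        exact max_le_add_of_nonneg (by positivity) (by positivity)
    _ ≤ _ := by
      rw [mul_add, add_comm]
      exact add_le_add h2 h1

/-- The double integral
`∬ |ψ(y)-ψ(z)| |y-z|^{-N-2s} f_x(y,z) dy dz` is finite, where `f_x` is the
comparison function from the three regimes `2s < 1`, `2s > 1`, `s = 1/2`. -/
theorem statement9 (N : ℕ) (hN : 1 ≤ N) (s : ℝ) (hs : s ∈ Set.Ioo (0 : ℝ) 1)
    (hNs : 2 * s < N) (x : EuclideanSpace ℝ (Fin N))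
    (ψ : EuclideanSpace ℝ (Fin N) → ℝ) (hψ : ContDiff ℝ (⊤ : ℕ∞) ψ)
    (hψc : HasCompactSupport ψ)
    (β : ℝ) (hβ : β ∈ Set.Ioo (0 : ℝ) 1) :
    (∫⁻ p : EuclideanSpace ℝ (Fin N) × EuclideanSpace ℝ (Fin N),
      ENNReal.ofReal
        (|ψ p.1 - ψ p.2| * ‖p.1 - p.2‖ ^ (-(N : ℝ) - 2 * s) *
          (if 2 * s < 1 then
              max (‖x - p.1‖ ^ (2 * s - (N : ℝ))) (‖x - p.2‖ ^ (2 * s - (N : ℝ)))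
            else if 1 < 2 * s then
              ‖p.1 - p.2‖ *
                max (‖x - p.1‖ ^ (2 * s - (N : ℝ) - 1)) (‖x - p.2‖ ^ (2 * s - (N : ℝ) - 1))
            else
              ‖p.1 - p.2‖ ^ β *
                max (‖x - p.1‖ ^ (1 - (N : ℝ) - β)) (‖x - p.2‖ ^ (1 - (N : ℝ) - β))))) < ⊤ := by
  obtain ⟨hs0, hs1⟩ := hs
  obtain ⟨hβ0, hβ1⟩ := hβ
  -- No assumption `y ≠ z` is needed: on the diagonal both sides vanish because `ψ y - ψ z = 0`.
  have absorb : ∀ (a m : ℝ) (y z : Euc N),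
      |ψ y - ψ z| * ‖y - z‖ ^ (-(N : ℝ) - 2 * s) * (‖y - z‖ ^ a * m) =
        |ψ y - ψ z| * ‖y - z‖ ^ (-(N : ℝ) - (2 * s - a)) * m := by
    intro a m y z
    rcases eq_or_ne y z with rfl | h
    · simp
    · have hpos : 0 < ‖y - z‖ := norm_pos_iff.2 (sub_ne_zero.2 h)
      have : ‖y - z‖ ^ (-(N : ℝ) - (2 * s - a)) =
          ‖y - z‖ ^ (-(N : ℝ) - 2 * s) * ‖y - z‖ ^ a := by
        rw [← Real.rpow_add hpos]; congr 1; ring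
      rw [this]; ring
  split_ifs with h1 h2
  · exact lintegral_max_lt_top hN (by linarith) h1 x hψ hψc
  · have e : 2 * s - (N : ℝ) - 1 = (2 * s - 1) - N := by ring
    have key := lintegral_max_lt_top hN (γ := 2 * s - 1) (by linarith) (by linarith) x hψ hψc
    simp only [← absorb, Real.rpow_one] at key
    rw [e]
    exact key
  · have hs2 : 2 * s = 1 := by linarith
    have e : 1 - (N : ℝ) - β = (2 * s - β) - N := by linarith
    have key := lintegral_max_lt_top hN (γ := 2 * s - β) (by linarith) (by linarith) x hψ hψc
    simp only [← absorb] at key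
    rw [e]
    exact key
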